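/- For complex numbers α, β with 0 < Re(α) < Re(β) and a real number b > 0, the integral ∫₀^∞ z^(α−1) (z + b + √(z² + 2bz))^(−β) dz converges and equals 2β · b^(−β) · (b/2)^α · Γ(2α)Γ(β − α) / Γ(1 + α + β). -/

import Mathlib

open MeasureTheory

/-!
Put `w = z + b + √(z² + 2bz)`. The substitution `z = b (1 - t)² / (2t)` rationalises the square
root: it maps `(0, 1)` bijectively onto `(0, ∞)`, with `w = b / t`. It therefore expresses the
Mellin transform of any function of `w` as `(b/2)^α` times an integral against the kernel
`(1 + t) t^(-α-1) (1 - t)^(2α-1)` on `(0, 1)`. For the function `w^(-β)` that integral is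
`b^(-β) (B(β - α, 2α) + B(β - α + 1, 2α))`, and `B(u + 1, v) = u / (u + v) B(u, v)` merges the two
terms.
-/

namespace Oberhettinger

open Complex Set

variable {b t z : ℝ} {u v : ℂ}

section BetaIntegral

/-- The integrand of the Beta integral `B(u, v)`, weighted by the factor `1 + t` which the Jacobian
of `rationalParam` contributes besides powers of `t` and `1 - t`. -/
noncomputable def weightedBetaIntegrand (u v : ℂ) (t : ℝ) : ℂ :=
  (1 + (t : ℂ)) * ((t : ℂ) ^ (u - 1) * (1 - (t : ℂ)) ^ (v - 1))

lemma weightedBetaIntegrand_add_left (ht : t ≠ 0) (u v s : ℂ) :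
    weightedBetaIntegrand (u + s) v t = weightedBetaIntegrand u v t * (t : ℂ) ^ s := by
  have ht' : (t : ℂ) ≠ 0 := ofReal_ne_zero.2 ht
  rw [weightedBetaIntegrand, weightedBetaIntegrand, add_sub_right_comm, cpow_add _ _ ht']
  ring

lemma weightedBetaIntegrand_smul_cpow_div (hb : 0 ≤ b) (ht : 0 < t) (u v s : ℂ) :
    weightedBetaIntegrand u v t • ((b / t : ℝ) : ℂ) ^ (-s) =
      (b : ℂ) ^ (-s) * weightedBetaIntegrand (u + s) v t := by
  rw [ofReal_div, div_cpow_ofReal_nonneg hb ht.le, cpow_neg (t : ℂ) s, div_inv_eq_mul,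
    weightedBetaIntegrand_add_left ht.ne', smul_eq_mul]
  ring

lemma weightedBetaIntegrand_eq_add (ht : t ≠ 0) (u v : ℂ) :
    weightedBetaIntegrand u v t = (t : ℂ) ^ (u - 1) * (1 - (t : ℂ)) ^ (v - 1) +
      (t : ℂ) ^ (u + 1 - 1) * (1 - (t : ℂ)) ^ (v - 1) := by
  have ht' : (t : ℂ) ≠ 0 := ofReal_ne_zero.2 ht
  rw [weightedBetaIntegrand, add_sub_right_comm u 1 1, cpow_add _ _ ht', cpow_one]
  ring

lemma betaIntegral_add_one_left (hu : 0 < u.re) (hv : 0 < v.re) :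
    betaIntegral (u + 1) v = u / (u + v) * betaIntegral u v := by
  have hu1 : 0 < (u + 1).re := by simpa using add_pos hu one_pos
  have hu0 : u ≠ 0 := ne_zero_of_re_pos hu
  have huv0 : u + v ≠ 0 := ne_zero_of_re_pos (add_pos hu hv)
  rw [betaIntegral_eq_Gamma_mul_div _ _ hu1 hv, betaIntegral_eq_Gamma_mul_div _ _ hu hv,
    add_right_comm, Gamma_add_one _ hu0, Gamma_add_one _ huv0, mul_assoc, mul_div_mul_comm]

lemma betaIntegral_add_betaIntegral_add_one_left (hu : 0 < u.re) (hv : 0 < v.re) :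
    betaIntegral u v + betaIntegral (u + 1) v =
      (2 * u + v) * Gamma u * Gamma v / Gamma (u + v + 1) := by
  have huv : 0 < (u + v).re := add_pos hu hv
  have huv0 : u + v ≠ 0 := ne_zero_of_re_pos huv
  have hΓ : Gamma (u + v) ≠ 0 := Gamma_ne_zero_of_re_pos huv
  rw [betaIntegral_add_one_left hu hv, betaIntegral_eq_Gamma_mul_div _ _ hu hv,
    Gamma_add_one _ huv0]
  field_simp
  ring

lemma integrableOn_weightedBetaIntegrand (hu : 0 < u.re) (hv : 0 < v.re) :
    IntegrableOn (weightedBetaIntegrand u v) (Ioo 0 1) :=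
  ((betaIntegral_convergent hu hv).continuousOn_mul (by fun_prop)).1.mono_set Ioo_subset_Ioc_self

lemma integral_weightedBetaIntegrand (hu : 0 < u.re) (hv : 0 < v.re) :
    ∫ t in Ioo (0 : ℝ) 1, weightedBetaIntegrand u v t =
      (2 * u + v) * Gamma u * Gamma v / Gamma (u + v + 1) := by
  have hu1 : 0 < (u + 1).re := by simpa using add_pos hu one_pos
  rw [setIntegral_congr_fun measurableSet_Ioo
      fun t ht => weightedBetaIntegrand_eq_add ht.1.ne' u v,
    ← integral_Ioc_eq_integral_Ioo, ← intervalIntegral.integral_of_le zero_le_one,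
    intervalIntegral.integral_add (betaIntegral_convergent hu hv) (betaIntegral_convergent hu1 hv)]
  exact betaIntegral_add_betaIntegral_add_one_left hu hv

end BetaIntegral

section RationalSubstitution

/-- The base `z + b + √(z² + 2bz)` of the power in Oberhettinger's integral. -/
noncomputable def radicalSum (b z : ℝ) : ℝ := z + b + √(z ^ 2 + 2 * b * z)

/-- The substitution `z = b (1 - t)² / (2t)`, which parametrises the conic `s² = z² + 2bz`
rationally and makes `radicalSum b z` equal to `b / t`. -/
noncomputable def rationalParam (b t : ℝ) : ℝ := b / 2 * (1 - t) ^ 2 / t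

lemma radicalSum_rationalParam (hb : 0 ≤ b) (ht0 : 0 < t) (ht1 : t ≤ 1) :
    radicalSum b (rationalParam b t) = b / t := by
  have radicand_eq_sq : rationalParam b t ^ 2 + 2 * b * rationalParam b t =
      (b * (1 - t ^ 2) / (2 * t)) ^ 2 := by
    unfold rationalParam
    field_simp
    ring
  have root_nonneg : 0 ≤ b * (1 - t ^ 2) / (2 * t) := by
    have : 0 ≤ 1 - t ^ 2 := by nlinarith
    positivity
  rw [radicalSum, radicand_eq_sq, Real.sqrt_sq root_nonneg, rationalParam]
  field_simp
  ring

lemma lt_radicalSum (b : ℝ) (hz : 0 < z) : b < radicalSum b z := by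
  have := Real.sqrt_nonneg (z ^ 2 + 2 * b * z)
  unfold radicalSum
  linarith

lemma rationalParam_div_radicalSum (hb : 0 < b) (hz : 0 < z) :
    rationalParam b (b / radicalSum b z) = z := by
  have hw : 0 < radicalSum b z := hb.trans (lt_radicalSum b hz)
  have hsq : (radicalSum b z - z - b) ^ 2 = z ^ 2 + 2 * b * z := by
    rw [show radicalSum b z - z - b = √(z ^ 2 + 2 * b * z) by unfold radicalSum; ring,
      Real.sq_sqrt (by positivity)]
  unfold rationalParam
  field_simp
  linear_combination hsq

lemma rationalParam_pos (hb : 0 < b) (ht0 : 0 < t) (ht1 : t < 1) : 0 < rationalParam b t := by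
  have : 0 < 1 - t := sub_pos.2 ht1
  unfold rationalParam
  positivity

lemma bijOn_rationalParam (hb : 0 < b) : BijOn (rationalParam b) (Ioo 0 1) (Ioi 0) := by
  refine InvOn.bijOn (f' := fun z => b / radicalSum b z) ⟨fun t ht => ?_, fun z hz => ?_⟩
    (fun t ht => rationalParam_pos hb ht.1 ht.2) (fun z hz => ?_)
  · simp only [radicalSum_rationalParam hb.le ht.1 ht.2.le, div_div_cancel₀ hb.ne']
  · exact rationalParam_div_radicalSum hb hz
  · have hw := lt_radicalSum b hz
    exact ⟨div_pos hb (hb.trans hw), (div_lt_one (hb.trans hw)).2 hw⟩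

lemma hasDerivAt_rationalParam (b : ℝ) (ht : t ≠ 0) :
    HasDerivAt (rationalParam b) (-(b / 2 * ((1 - t ^ 2) / t ^ 2))) t := by
  have hnum : HasDerivAt (fun t : ℝ => b / 2 * (1 - t) ^ 2) (b / 2 * (2 * (1 - t) * -1)) t := by
    simpa using (((hasDerivAt_id t).const_sub 1).pow 2).const_mul (b / 2)
  refine (hnum.div (hasDerivAt_id t) ht).congr_deriv ?_
  simp only [id]
  field_simp
  ring

end RationalSubstitution

section ChangeOfVariables

lemma abs_deriv_rationalParam (hb : 0 ≤ b) (ht0 : 0 ≤ t) (ht1 : t ≤ 1) :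
    |-(b / 2 * ((1 - t ^ 2) / t ^ 2))| = b / 2 * ((1 - t ^ 2) / t ^ 2) := by
  have : 0 ≤ 1 - t ^ 2 := by nlinarith
  rw [abs_neg, abs_of_nonneg (by positivity)]

lemma cpow_rationalParam (hb : 0 ≤ b) (ht0 : 0 ≤ t) (ht1 : t ≤ 1) (s : ℂ) :
    (rationalParam b t : ℂ) ^ s = ((b : ℂ) / 2) ^ s * (1 - (t : ℂ)) ^ (2 * s) / (t : ℂ) ^ s := by
  have h1t : 0 ≤ 1 - t := sub_nonneg.2 ht1
  have hb2 : 0 ≤ b / 2 := by positivity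
  have sq_cpow : (((1 - t) ^ 2 : ℝ) : ℂ) ^ s = ((1 - t : ℝ) : ℂ) ^ (2 * s) := by
    rw [pow_two, ofReal_mul, mul_cpow_ofReal_nonneg h1t h1t, cpow_ofNat_mul, pow_two]
  rw [rationalParam, ofReal_div, div_cpow_ofReal_nonneg (by positivity) ht0, ofReal_mul,
    mul_cpow_ofReal_nonneg hb2 (sq_nonneg _), sq_cpow]
  push_cast
  rfl

lemma deriv_mul_cpow_rationalParam (hb : 0 < b) (ht0 : 0 < t) (ht1 : t < 1) (α : ℂ) :
    ((b / 2 * ((1 - t ^ 2) / t ^ 2) : ℝ) : ℂ) * (rationalParam b t : ℂ) ^ (α - 1) =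
      ((b : ℂ) / 2) ^ α * weightedBetaIntegrand (-α) (2 * α) t := by
  have hb' : (b : ℂ) ≠ 0 := ofReal_ne_zero.2 hb.ne'
  have ht' : (t : ℂ) ≠ 0 := ofReal_ne_zero.2 ht0.ne'
  have h1t : 1 - (t : ℂ) ≠ 0 := mod_cast (sub_pos.2 ht1).ne'
  have hz : (rationalParam b t : ℂ) ≠ 0 := ofReal_ne_zero.2 (rationalParam_pos hb ht0 ht1).ne'
  rw [weightedBetaIntegrand, cpow_sub _ _ hz, cpow_rationalParam hb.le ht0.le ht1.le,
    cpow_sub _ _ ht', cpow_sub _ _ h1t, cpow_neg]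
  simp only [cpow_one, rationalParam]
  push_cast
  field_simp
  ring

variable {E : Type*} [NormedAddCommGroup E] [NormedSpace ℂ E]

lemma abs_deriv_smul_mellinIntegrand_rationalParam (hb : 0 < b) (g : ℝ → E) (α : ℂ)
    (ht : t ∈ Ioo 0 1) :
    |-(b / 2 * ((1 - t ^ 2) / t ^ 2))| •
        ((rationalParam b t : ℂ) ^ (α - 1) • g (radicalSum b (rationalParam b t))) =
      ((b : ℂ) / 2) ^ α • weightedBetaIntegrand (-α) (2 * α) t • g (b / t) := by
  rw [abs_deriv_rationalParam hb.le ht.1.le ht.2.le, radicalSum_rationalParam hb.le ht.1 ht.2.le,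
    ← coe_smul, smul_smul, smul_smul, deriv_mul_cpow_rationalParam hb ht.1 ht.2]

lemma mellinConvergent_comp_radicalSum_iff (hb : 0 < b) (g : ℝ → E) (α : ℂ) :
    MellinConvergent (fun z => g (radicalSum b z)) α ↔
      IntegrableOn (fun t => weightedBetaIntegrand (-α) (2 * α) t • g (b / t)) (Ioo 0 1) := by
  have hc : ((b : ℂ) / 2) ^ α ≠ 0 := by simp [cpow_eq_zero_iff, hb.ne']
  rw [MellinConvergent, ← (bijOn_rationalParam hb).image_eq,
    integrableOn_image_iff_integrableOn_abs_deriv_smul measurableSet_Ioo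
      (fun t ht => (hasDerivAt_rationalParam b ht.1.ne').hasDerivWithinAt)
      (bijOn_rationalParam hb).injOn,
    integrableOn_congr_fun
      (fun t ht => abs_deriv_smul_mellinIntegrand_rationalParam hb g α ht) measurableSet_Ioo]
  exact integrable_fun_smul_iff hc _

lemma mellin_comp_radicalSum (hb : 0 < b) (g : ℝ → E) (α : ℂ) :
    mellin (fun z => g (radicalSum b z)) α =
      ((b : ℂ) / 2) ^ α •
        ∫ t in Ioo (0 : ℝ) 1, weightedBetaIntegrand (-α) (2 * α) t • g (b / t) := by
  rw [mellin, ← (bijOn_rationalParam hb).image_eq,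
    integral_image_eq_integral_abs_deriv_smul measurableSet_Ioo
      (fun t ht => (hasDerivAt_rationalParam b ht.1.ne').hasDerivWithinAt)
      (bijOn_rationalParam hb).injOn,
    setIntegral_congr_fun measurableSet_Ioo
      (fun t ht => abs_deriv_smul_mellinIntegrand_rationalParam hb g α ht),
    integral_smul]

end ChangeOfVariables

end Oberhettinger

open Oberhettinger in
/-- **Oberhettinger's integral formula.**
For complex `α, β` with `0 < Re α < Re β` and real `b > 0`, the integral
`∫₀^∞ z^(α−1) (z + b + √(z² + 2bz))^(−β) dz` converges and equals
`2β b^(−β) (b/2)^α Γ(2α) Γ(β−α) / Γ(1+α+β)`. -/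
theorem oberhettinger_integral (α β : ℂ) (b : ℝ) (hb : 0 < b)
    (hα : 0 < α.re) (hαβ : α.re < β.re) :
    IntegrableOn
      (fun z : ℝ => (z : ℂ) ^ (α - 1) *
        ((z + b + Real.sqrt (z ^ 2 + 2 * b * z) : ℝ) : ℂ) ^ (-β))
      (Set.Ioi 0) volume ∧
    ∫ z in Set.Ioi (0 : ℝ),
        (z : ℂ) ^ (α - 1) *
          ((z + b + Real.sqrt (z ^ 2 + 2 * b * z) : ℝ) : ℂ) ^ (-β)
      = 2 * β * (b : ℂ) ^ (-β) * ((b : ℂ) / 2) ^ α *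
          Complex.Gamma (2 * α) * Complex.Gamma (β - α) /
          Complex.Gamma (1 + α + β) := by
  have hu : 0 < (-α + β).re := by simpa using hαβ
  have hv : 0 < (2 * α).re := by simpa using hα
  have hpow : Set.EqOn _ _ (Set.Ioo (0 : ℝ) 1) :=
    fun t ht => weightedBetaIntegrand_smul_cpow_div hb.le ht.1 (-α) (2 * α) β
  change HasMellin (fun z => (radicalSum b z : ℂ) ^ (-β)) α _
  constructor
  · rw [mellinConvergent_comp_radicalSum_iff hb (fun w => (w : ℂ) ^ (-β)),
      integrableOn_congr_fun hpow measurableSet_Ioo]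
    exact (integrableOn_weightedBetaIntegrand hu hv).const_mul _
  · rw [mellin_comp_radicalSum hb (fun w => (w : ℂ) ^ (-β)),
      setIntegral_congr_fun measurableSet_Ioo hpow, integral_const_mul,
      integral_weightedBetaIntegrand hu hv, smul_eq_mul, neg_add_eq_sub,
      show 2 * (β - α) + 2 * α = 2 * β by ring, show β - α + 2 * α + 1 = 1 + α + β by ring]
    ring
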